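/- Let ε ∈ (0,1) be a real and let r, l be positive integers with l = r·ε² (so ε is such that r·ε² is an integer). Let v be a binary string such that l divides |v| and r ≤ ε²·|v|, and write v as the concatenation of N = |v|/l blocks v₁, …, v_N each of length l. Set a = adv(v, A_r). If a ≥ 8ε², then the variance of the block biases satisfies (1/N)·∑_{j=1}^{N} (bias(v_j) − bias(v))² ≥ (a − 8ε²)·(a − 5ε²)² / 144. -/

import Mathlib

/-- The length of a longest common subsequence of `x` and `y`. -/
noncomputable def LCS {α : Type*} (x y : List α) : ℕ :=
  sSup {n | ∃ u : List α, u.Sublist x ∧ u.Sublist y ∧ u.length = n}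

/-- The contiguous substring of the infinite alternating binary string `A_r = (0^r 1^r)^∞`
starting at (0-indexed) position `i` and having length `m`. -/
def altSeg (r i m : ℕ) : List Bool :=
  (List.range m).map (fun t => decide (((i + t) / r) % 2 = 1))

/-- Advantage of `a` over `b`: `(3·LCS(a,b) − |a| − |b|) / |a|`. -/
noncomputable def advR (a b : List Bool) : ℝ :=
  (3 * (LCS a b : ℝ) - a.length - b.length) / a.length

/-- Advantage of `a` to the infinite alternating string `A_r`: the supremum of the
advantage of `a` over all finite contiguous substrings of `A_r`. -/
noncomputable def advInf (a : List Bool) (r : ℕ) : ℝ :=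
  sSup {x : ℝ | ∃ i m : ℕ, x = advR a (altSeg r i m)}

/-- The bias of a binary string: `(count₁(w) − count₀(w)) / |w|`. -/
noncomputable def bias (w : List Bool) : ℝ :=
  ((w.count true : ℝ) - (w.count false : ℝ)) / w.length

lemma altSeg_length (r i m : ℕ) : (altSeg r i m).length = m := by simp [altSeg]

lemma altSeg_append (r i p q : ℕ) :
    altSeg r i (p + q) = altSeg r i p ++ altSeg r (i + p) q := by
  simp [altSeg, List.range_add, Function.comp_def, add_assoc]

lemma altSeg_split (r i m : ℕ) (x y : List Bool) (h : altSeg r i m = x ++ y) :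
    ∃ p q, m = p + q ∧ x = altSeg r i p ∧ y = altSeg r (i + p) q := by
  have hl : m = x.length + y.length := by
    rw [← List.length_append, ← h, altSeg_length]
  refine ⟨x.length, y.length, hl, ?_⟩
  rw [hl, altSeg_append] at h
  have := List.append_inj h (by simp [altSeg_length])
  exact ⟨this.1.symm, this.2.symm⟩

/-- Potential tracking (zeros minus ones) in prefixes of `A_r`. -/
def potG (r k : ℕ) : ℤ := if (k / r) % 2 = 1 then (r : ℤ) - (k % r : ℕ) else (k % r : ℕ)

lemma potG_nonneg (r k : ℕ) (hr : 0 < r) : 0 ≤ potG r k ∧ potG r k ≤ r := by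
  have := Nat.mod_lt k hr
  unfold potG
  split_ifs <;> constructor <;> omega

lemma potG_succ (r k : ℕ) (hr : 0 < r) :
    potG r (k + 1) = potG r k + if (k / r) % 2 = 1 then -1 else 1 := by
  have hlt := Nat.mod_lt k hr
  have hk := Nat.div_add_mod k r
  by_cases h : k % r + 1 < r
  · have h1 : (k + 1) / r = k / r := by
      rw [Nat.div_eq_iff hr]
      have h2 : k / r * r = r * (k / r) := mul_comm _ _
      omega
    have h2 : (k + 1) % r = k % r + 1 := by
      have h3 := Nat.div_add_mod (k + 1) r
      rw [h1] at h3
      omega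
    unfold potG
    rw [h1, h2]
    split_ifs <;> push_cast <;> ring
  · have h0 : k % r + 1 = r := by omega
    have h1 : (k + 1) / r = k / r + 1 := by
      rw [Nat.div_eq_iff hr]
      have h2 : (k / r + 1) * r = r * (k / r) + r := by ring
      omega
    have h2 : (k + 1) % r = 0 := by
      have h3 := Nat.div_add_mod (k + 1) r
      rw [h1, mul_add] at h3
      omega
    unfold potG
    rw [h1, h2]
    split_ifs <;> omega

lemma altSeg_diff (r i m : ℕ) (hr : 0 < r) :
    ((altSeg r i m).count false : ℤ) - (altSeg r i m).count true = potG r (i + m) - potG r i := by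
  induction m with
  | zero => simp [altSeg]
  | succ m ih =>
    rw [altSeg_append, ← add_assoc, potG_succ _ _ hr]
    have h1 : altSeg r (i + m) 1 = [decide (((i + m) / r) % 2 = 1)] := by simp [altSeg]
    rw [h1, List.count_append, List.count_append]
    by_cases h : ((i + m) / r) % 2 = 1
    · simp [h]; omega
    · simp [h]; omega

lemma altSeg_const (r i m : ℕ) (h : (i + m) / r = i / r) :
    altSeg r i m = List.replicate m (decide ((i / r) % 2 = 1)) := by
  rw [List.eq_replicate_iff]
  refine ⟨altSeg_length _ _ _, ?_⟩
  intro b hb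
  simp only [altSeg, List.mem_map, List.mem_range] at hb
  obtain ⟨t, ht, rfl⟩ := hb
  have h1 : i / r ≤ (i + t) / r := Nat.div_le_div_right (by omega)
  have h2 : (i + t) / r ≤ (i + m) / r := Nat.div_le_div_right (by omega)
  have : (i + t) / r = i / r := by omega
  rw [this]

lemma count_tf (w : List Bool) : w.count true + w.count false = w.length := by
  induction w with
  | nil => simp
  | cons b w ih => cases b <;> simp <;> omega

lemma bias_bound (w : List Bool) : |bias w| ≤ 1 := by
  have h : (w.count true : ℝ) + w.count false = w.length := by exact_mod_cast count_tf w
  have h1 : (0 : ℝ) ≤ w.count true := by positivity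
  have h2 : (0 : ℝ) ≤ w.count false := by positivity
  unfold bias
  rw [abs_div]
  apply div_le_one_of_le₀
  · rw [Nat.abs_cast, abs_le]; constructor <;> linarith
  · positivity

lemma exists_mu (β : ℝ) (h : |β| ≤ 1) :
    ∃ μ : ℝ, |μ| ≤ 1 ∧ (2 - μ) * (1 + β) ≤ 2 ∧ (2 + μ) * (1 - β) ≤ 2 := by
  rw [abs_le] at h
  rcases le_total 0 β with hb | hb
  · have hp : 0 < 1 + β := by linarith
    refine ⟨2 * β / (1 + β), ?_, ?_, ?_⟩
    · rw [abs_of_nonneg (by positivity), div_le_one hp]; linarith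
    · field_simp; nlinarith
    · rw [show (2 + 2 * β / (1 + β)) * (1 - β) = ((2 + 4 * β) * (1 - β)) / (1 + β) by
        field_simp; ring, div_le_iff₀ hp]
      nlinarith
  · have hp : 0 < 1 - β := by linarith
    refine ⟨2 * β / (1 - β), ?_, ?_, ?_⟩
    · rw [abs_of_nonpos (div_nonpos_of_nonpos_of_nonneg (by linarith) hp.le), ← neg_div,
        div_le_one hp]; linarith
    · rw [show (2 - 2 * β / (1 - β)) * (1 + β) = ((2 - 4 * β) * (1 + β)) / (1 - β) by
        field_simp; ring, div_le_iff₀ hp]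
      nlinarith
    · field_simp; nlinarith

/-- Signed count difference. -/
noncomputable def dif (w : List Bool) : ℝ := (w.count true : ℝ) - w.count false

lemma dif_append (x y : List Bool) : dif (x ++ y) = dif x + dif y := by
  simp [dif]; ring

lemma block_bound (r l : ℕ) (hr : 0 < r) (hl : 0 < l) (β μ : ℝ) (hμ : |μ| ≤ 1)
    (h1 : (2 - μ) * (1 + β) ≤ 2) (h2 : (2 + μ) * (1 - β) ≤ 2)
    (w u : List Bool) (i m : ℕ) (hw : w.length = l) (huw : u.Sublist w)
    (hub : u.Sublist (altSeg r i m)) :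
    3 * (u.length : ℝ) - l - m - μ * dif (altSeg r i m) ≤
      3 / 2 * l * |bias w - β| + 2 * l * ((((i + m) / r : ℕ) : ℝ) - ((i / r : ℕ) : ℝ)) := by
  rw [abs_le] at hμ
  have hl' : (0 : ℝ) < l := by exact_mod_cast hl
  have ew : (w.count true : ℝ) + w.count false = l := by
    rw [← hw]; exact_mod_cast count_tf w
  have eu : (u.count true : ℝ) + u.count false = u.length := by exact_mod_cast count_tf u
  have em : ((altSeg r i m).count true : ℝ) + (altSeg r i m).count false = m := by
    have := count_tf (altSeg r i m)
    rw [altSeg_length] at this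
    exact_mod_cast this
  have a1 : (u.count true : ℝ) ≤ w.count true := by exact_mod_cast huw.count_le true
  have a0 : (u.count false : ℝ) ≤ w.count false := by exact_mod_cast huw.count_le false
  have b1 : (u.count true : ℝ) ≤ (altSeg r i m).count true := by exact_mod_cast hub.count_le true
  have b0 : (u.count false : ℝ) ≤ (altSeg r i m).count false := by
    exact_mod_cast hub.count_le false
  have p1 : (0 : ℝ) ≤ u.count true := by positivity
  have p0 : (0 : ℝ) ≤ u.count false := by positivity
  have eb : bias w * l = (w.count true : ℝ) - w.count false := by
    unfold bias; rw [hw]; field_simp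
  have hge : 3 * (u.length : ℝ) - l - m - μ * dif (altSeg r i m) ≤
      (2 - μ) * u.count true + (2 + μ) * u.count false - l := by
    unfold dif
    rw [← eu, ← em]
    nlinarith [mul_le_mul_of_nonneg_left b1 (by linarith : 0 ≤ 1 + μ),
      mul_le_mul_of_nonneg_left b0 (by linarith : 0 ≤ 1 - μ)]
  refine hge.trans ?_
  have hmono : i / r ≤ (i + m) / r := Nat.div_le_div_right (by omega)
  rcases hmono.eq_or_lt with h | h
  · rw [← h, sub_self, mul_zero, add_zero]
    have hc := altSeg_const r i m h.symm
    by_cases hb : (i / r) % 2 = 1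
    · have z : (altSeg r i m).count false = 0 := by rw [hc]; simp [hb, List.count_replicate]
      have z' : (u.count false : ℝ) = 0 := by rw [z] at b0; push_cast at b0; linarith
      rw [z']
      have hd := le_abs_self (bias w - β)
      have hn := abs_nonneg (bias w - β)
      have s1 := mul_le_mul_of_nonneg_left a1 (by linarith : 0 ≤ 2 - μ)
      have s2 : (w.count true : ℝ) = l * (1 + β + (bias w - β)) / 2 := by linarith
      rw [s2] at s1
      have s3 : (2 - μ) * (bias w - β) ≤ 3 * |bias w - β| := by
        nlinarith
      nlinarith [mul_le_mul_of_nonneg_left h1 hl'.le, mul_le_mul_of_nonneg_left s3 hl'.le]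
    · have z : (altSeg r i m).count true = 0 := by rw [hc]; simp [hb, List.count_replicate]
      have z' : (u.count true : ℝ) = 0 := by rw [z] at b1; push_cast at b1; linarith
      rw [z']
      have hd := neg_le_abs (bias w - β)
      have hn := abs_nonneg (bias w - β)
      have s1 := mul_le_mul_of_nonneg_left a0 (by linarith : 0 ≤ 2 + μ)
      have s2 : (w.count false : ℝ) = l * (1 - β + -(bias w - β)) / 2 := by linarith
      rw [s2] at s1
      have s3 : (2 + μ) * (-(bias w - β)) ≤ 3 * |bias w - β| := by
        nlinarith
      nlinarith [mul_le_mul_of_nonneg_left h2 hl'.le, mul_le_mul_of_nonneg_left s3 hl'.le]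
  · have h' : ((i / r : ℕ) : ℝ) + 1 ≤ (((i + m) / r : ℕ) : ℝ) := by exact_mod_cast h
    have hn : 0 ≤ 3 / 2 * l * |bias w - β| := by positivity
    have s : (2 - μ) * u.count true + (2 + μ) * u.count false - l ≤ 2 * (l : ℝ) := by
      nlinarith [mul_nonneg p1 (by linarith : 0 ≤ 1 + μ), mul_nonneg p0 (by linarith : 0 ≤ 1 - μ)]
    nlinarith

lemma blocks_bound (r l : ℕ) (hr : 0 < r) (hl : 0 < l) (β μ : ℝ) (hμ : |μ| ≤ 1)
    (h1 : (2 - μ) * (1 + β) ≤ 2) (h2 : (2 + μ) * (1 - β) ≤ 2) (N : ℕ) :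
    ∀ (v u : List Bool) (i m : ℕ), v.length = N * l → u.Sublist v → u.Sublist (altSeg r i m) →
    3 * (u.length : ℝ) - N * l - m - μ * dif (altSeg r i m) ≤
      3 / 2 * l * ∑ j ∈ Finset.range N, |bias ((v.drop (j * l)).take l) - β| +
        2 * l * ((((i + m) / r : ℕ) : ℝ) - ((i / r : ℕ) : ℝ)) := by
  induction N with
  | zero =>
    intro v u i m hv huv hub
    have : v = [] := by simpa using hv
    subst this
    have : u = [] := by simpa using huv
    subst this
    have hmono : ((i / r : ℕ) : ℝ) ≤ (((i + m) / r : ℕ) : ℝ) := by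
      exact_mod_cast Nat.div_le_div_right (by omega)
    have em : ((altSeg r i m).count true : ℝ) + (altSeg r i m).count false = m := by
      have := count_tf (altSeg r i m)
      rw [altSeg_length] at this
      exact_mod_cast this
    have p1 : (0 : ℝ) ≤ (altSeg r i m).count true := by positivity
    have p0 : (0 : ℝ) ≤ (altSeg r i m).count false := by positivity
    have hq : 0 ≤ 2 * (l : ℝ) * ((((i + m) / r : ℕ) : ℝ) - ((i / r : ℕ) : ℝ)) :=
      mul_nonneg (by positivity) (by linarith)
    rw [abs_le] at hμ
    have : -(m : ℝ) - μ * dif (altSeg r i m) ≤ 0 := by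
      unfold dif
      rw [← em]
      nlinarith [mul_nonneg p1 (by linarith : 0 ≤ 1 + μ), mul_nonneg p0 (by linarith : 0 ≤ 1 - μ)]
    simp only [List.length_nil, Finset.range_zero, Finset.sum_empty]
    push_cast at *
    linarith
  | succ N ih =>
    intro v u i m hv huv hub
    rw [← List.take_append_drop l v, List.sublist_append_iff] at huv
    obtain ⟨u1, u2, rfl, hu1, hu2⟩ := huv
    rw [List.append_sublist_iff] at hub
    obtain ⟨x, y, hxy, hx, hy⟩ := hub
    obtain ⟨p, q, rfl, rfl, rfl⟩ := altSeg_split _ _ _ _ _ hxy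
    have e1 := block_bound r l hr hl β μ hμ h1 h2 (v.take l) u1 i p
      (by rw [List.length_take, hv]; apply min_eq_left; nlinarith) hu1 hx
    have e2 := ih (v.drop l) u2 (i + p) q
      (by rw [List.length_drop, hv, add_mul]; omega) hu2 hy
    rw [Finset.sum_range_succ', altSeg_append, dif_append, List.length_append]
    have e3 : ∀ j, (List.drop ((j + 1) * l) v) = List.drop (j * l) (List.drop l v) := by
      intro j
      rw [List.drop_drop]; congr 1; ring
    simp only [e3, Nat.zero_mul, List.drop_zero, ← add_assoc]
    push_cast at *
    linarith

theorem stmt13 (ε : ℝ) (hε : ε ∈ Set.Ioo (0 : ℝ) 1) (r l : ℕ) (hr : 0 < r) (hl : 0 < l)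
    (hrl : (l : ℝ) = r * ε ^ 2) (v : List Bool) (hdvd : l ∣ v.length)
    (hrv : (r : ℝ) ≤ ε ^ 2 * v.length)
    (a : ℝ) (ha : a = advInf v r) (h8 : 8 * ε ^ 2 ≤ a) :
    (a - 8 * ε ^ 2) * (a - 5 * ε ^ 2) ^ 2 / 144 ≤
      (1 / ((v.length / l : ℕ) : ℝ)) *
        ∑ j ∈ Finset.range (v.length / l), (bias ((v.drop (j * l)).take l) - bias v) ^ 2 := by
  obtain ⟨N, hN⟩ := hdvd
  have hdiv : v.length / l = N := by rw [hN]; exact Nat.mul_div_cancel_left N hl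
  rw [hdiv]
  have hr' : (0 : ℝ) < r := by exact_mod_cast hr
  have hl' : (0 : ℝ) < l := by exact_mod_cast hl
  have hy : 0 < ε ^ 2 := by have := hε.1; positivity
  have hy1 : ε ^ 2 ≤ 1 := by nlinarith [hε.1, hε.2]
  set y := ε ^ 2 with hydef
  have hn : (0 : ℝ) < v.length := by
    by_contra hcon
    nlinarith
  have hNl : (v.length : ℝ) = l * N := by exact_mod_cast hN
  have hN0 : (0 : ℝ) < N := by
    by_contra hcon
    nlinarith
  set S := ∑ j ∈ Finset.range N, |bias ((v.drop (j * l)).take l) - bias v| with hS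
  have hS0 : 0 ≤ S := Finset.sum_nonneg fun _ _ => abs_nonneg _
  obtain ⟨μ, hμ, hm1, hm2⟩ := exists_mu (bias v) (bias_bound v)
  have key : ∀ i m : ℕ, advR v (altSeg r i m) ≤ 2 ∧
      advR v (altSeg r i m) ≤ 7 * y + 3 / 2 * S / N := by
    intro i m
    obtain ⟨u, huv, hub, hu⟩ : ∃ u : List Bool, u.Sublist v ∧ u.Sublist (altSeg r i m) ∧
        u.length = LCS v (altSeg r i m) := by
      apply Nat.sSup_mem (s := {n | ∃ u : List Bool, u.Sublist v ∧
        u.Sublist (altSeg r i m) ∧ u.length = n})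
      · exact ⟨0, [], by simp⟩
      · refine ⟨v.length, ?_⟩
        rintro n ⟨u, h, -, rfl⟩
        exact h.length_le
    have hlen : (u.length : ℝ) ≤ v.length := by exact_mod_cast huv.length_le
    have hm0 : (0 : ℝ) ≤ m := by positivity
    unfold advR
    rw [← hu, altSeg_length]
    constructor
    · rw [div_le_iff₀ hn]; linarith
    have hB : 0 ≤ 7 * y + 3 / 2 * S / N := by positivity
    rcases le_total (3 * (u.length : ℝ) - v.length - m) 0 with hneg | hpos
    · exact (div_nonpos_of_nonpos_of_nonneg hneg hn.le).trans hB
    have hm : (m : ℝ) ≤ 2 * v.length := by linarith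
    have hb := blocks_bound r l hr hl (bias v) μ hμ hm1 hm2 N v u i m
      (by rw [hN, mul_comm]) huv hub
    rw [← hS] at hb
    have hdif : |dif (altSeg r i m)| ≤ r := by
      have h := altSeg_diff r i m hr
      have g1 := potG_nonneg r i hr
      have g2 := potG_nonneg r (i + m) hr
      have h' : |((altSeg r i m).count true : ℤ) - (altSeg r i m).count false| ≤ r := by
        rw [abs_le]; constructor <;> linarith
      unfold dif
      exact_mod_cast h'
    have hmd : μ * dif (altSeg r i m) ≤ r := by
      refine (le_abs_self _).trans ?_
      rw [abs_mul]
      nlinarith [abs_nonneg (dif (altSeg r i m)), abs_nonneg μ]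
    have hq : ((((i + m) / r : ℕ) : ℝ) - ((i / r : ℕ) : ℝ)) ≤ m / r + 1 := by
      have c1 : (((i + m) / r : ℕ) : ℝ) ≤ ((i + m : ℕ) : ℝ) / r := Nat.cast_div_le
      have c2 : (i : ℝ) / r < ((i / r : ℕ) : ℝ) + 1 := by
        rw [div_lt_iff₀ hr']
        exact_mod_cast (by
          have := Nat.div_add_mod i r
          have := Nat.mod_lt i hr
          nlinarith : i < (i / r + 1) * r)
      push_cast [add_div] at c1
      linarith
    have hq2 : 2 * (l : ℝ) * ((((i + m) / r : ℕ) : ℝ) - ((i / r : ℕ) : ℝ)) ≤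
        6 * y * v.length := by
      calc _ ≤ 2 * (l : ℝ) * (m / r + 1) := by gcongr
        _ = 2 * y * (m + r) := by rw [hrl]; field_simp
        _ ≤ 2 * y * (2 * v.length + y * v.length) := by gcongr
        _ ≤ 2 * y * (2 * v.length + 1 * v.length) := by gcongr
        _ = _ := by ring
    rw [div_le_iff₀ hn]
    have : 3 / 2 * S / N * v.length = 3 / 2 * l * S := by rw [hNl]; field_simp
    nlinarith
  have hne : {x : ℝ | ∃ i m : ℕ, x = advR v (altSeg r i m)}.Nonempty := ⟨_, 0, 0, rfl⟩
  have ha2 : a ≤ 2 := by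
    rw [ha]; apply csSup_le hne
    rintro x ⟨i, m, rfl⟩; exact (key i m).1
  have haB : a ≤ 7 * y + 3 / 2 * S / N := by
    rw [ha]; apply csSup_le hne
    rintro x ⟨i, m, rfl⟩; exact (key i m).2
  have hcs : S ^ 2 ≤ N * ∑ j ∈ Finset.range N,
      (bias ((v.drop (j * l)).take l) - bias v) ^ 2 := by
    have := sq_sum_le_card_mul_sum_sq (s := Finset.range N)
      (f := fun j => |bias ((v.drop (j * l)).take l) - bias v|)
    simpa [sq_abs] using this
  have hV : (S / N) ^ 2 ≤ (1 / (N : ℝ)) * ∑ j ∈ Finset.range N,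
      (bias ((v.drop (j * l)).take l) - bias v) ^ 2 := by
    rw [div_pow, div_le_iff₀ (by positivity)]
    refine hcs.trans (le_of_eq ?_)
    field_simp
  refine le_trans ?_ hV
  have hT : 2 / 3 * (a - 7 * y) ≤ S / N := by
    have : 3 / 2 * S / N = 3 / 2 * (S / N) := by ring
    linarith
  have hx : 0 ≤ a - 8 * y := by linarith
  calc _ ≤ (2 / 3 * (a - 7 * y)) ^ 2 := by
        have q1 : (a - 5 * y) ^ 2 ≤ (3 * (a - 7 * y)) ^ 2 := by
          apply pow_le_pow_left₀ <;> linarith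
        have q2 : (a - 8 * y) * (a - 5 * y) ^ 2 ≤ 2 * (3 * (a - 7 * y)) ^ 2 :=
          mul_le_mul (by linarith) q1 (by positivity) (by norm_num)
        nlinarith [sq_nonneg (a - 7 * y)]
    _ ≤ _ := by apply pow_le_pow_left₀ <;> linarith
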